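/- arXiv:0704.1463 — 5 statements merged into one kernel-verified Lean document; each statement's English description precedes it below -/
import Mathlib

section
/- For every real number μ with 0 < μ < 1, the series Σ_{k=1}^∞ k·e^{−kμ}(kμ)^{k−1}/k! converges and its sum equals 1/(1−μ) (i.e. the Borel(μ) distribution has mean 1/(1−μ)). -/
/-- The Borel(μ) weight `p_μ(k) = e^{-kμ} (kμ)^{k-1} / k!`, written for `k = n+1`. -/
noncomputable def borelWeight (μ : ℝ) (n : ℕ) : ℝ :=
  Real.exp (-((n : ℝ) + 1) * μ) * (((n : ℝ) + 1) * μ) ^ n / (Nat.factorial (n + 1) : ℝ)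

/-!
For complex `y`, expand each exponential in `∑ₙ e^{-(n+y)z} ((n+y)z)ⁿ / n!`. For small `z` the
resulting double series converges absolutely and may be summed along antidiagonals; the `m`-th
antidiagonal is `zᵐ / m!` times the `m`-th forward difference of `t ↦ tᵐ` at `y`, hence equals `zᵐ`,
and the sum is the geometric series. The single series converges, locally uniformly, wherever
`|z e^{1-z}| < 1`, and the part of this region with `Re z < 1` is star-shaped about `0`, so the
identity extends to it by analytic continuation. The Borel mean is the case `y = 1`, `z = μ`.
-/

open Finset Topology
open scoped Nat

theorem sum_antidiagonal_neg_one_pow_mul_choose_mul_add_pow {R : Type*} [CommRing R]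
    (y : R) (m : ℕ) :
    ∑ p ∈ antidiagonal m, (-1) ^ p.2 * (m.choose p.1 : R) * (p.1 + y) ^ m = m ! := by
  have hdiff := fwdDiff_iter_eq_sum_shift (1 : R) (fun t ↦ t ^ m) m y
  rw [fwdDiff_iter_eq_factorial] at hdiff
  rw [Nat.sum_antidiagonal_eq_sum_range_succ_mk]
  simpa [add_comm y] using hdiff.symm

theorem sum_antidiagonal_pow_div_factorial_mul_neg_pow_div_factorial {K : Type*} [Field K]
    [CharZero K] (y z : K) (m : ℕ) :
    ∑ p ∈ antidiagonal m,
      ((p.1 + y) * z) ^ p.1 / (p.1 ! : K) * ((-((p.1 + y) * z)) ^ p.2 / (p.2 ! : K)) = z ^ m := by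
  have hm : (m ! : K) ≠ 0 := mod_cast m.factorial_ne_zero
  calc
    _ = ∑ p ∈ antidiagonal m,
        z ^ m / m ! * ((-1) ^ p.2 * (m.choose p.1 : K) * (p.1 + y) ^ m) := by
      refine sum_congr rfl fun ⟨i, j⟩ hij ↦ ?_
      obtain rfl : i + j = m := mem_antidiagonal.mp hij
      rw [Nat.cast_add_choose, neg_pow, mul_pow, mul_pow]
      field_simp
      ring
    _ = z ^ m := by
      rw [← mul_sum, sum_antidiagonal_neg_one_pow_mul_choose_mul_add_pow, div_mul_cancel₀ _ hm]

theorem hasSum_sum_antidiagonal {A α : Type*} [AddMonoid A] [HasAntidiagonal A]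
    [AddCommMonoid α] [TopologicalSpace α] [ContinuousAdd α] [RegularSpace α]
    {f : A × A → α} {a : α} (hf : HasSum f a) :
    HasSum (fun m ↦ ∑ p ∈ antidiagonal m, f p) a := by
  have hsigma := (HasAntidiagonal.sigmaAntidiagonalEquivProd.hasSum_iff.mpr hf).sigma
    fun m ↦ hasSum_fintype _
  exact hsigma.congr_fun fun m ↦ (sum_coe_sort (antidiagonal m) f).symm

/-- The mass at `n` of the Poisson law of parameter `(n + y) z`, continued to complex `y` and `z`.
At `y = 1` it is the `n`-th term of the series for the mean of the Borel law. -/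
noncomputable def poissonDiagonal (y z : ℂ) (n : ℕ) : ℂ :=
  Complex.exp (-(n + y) * z) * ((n + y) * z) ^ n / n !

theorem norm_poissonDiagonal_le (y z : ℂ) (n : ℕ) :
    ‖poissonDiagonal y z n‖ ≤
      Real.exp ‖y‖ * ‖Complex.exp (-y * z)‖ * ‖z * Complex.exp (1 - z)‖ ^ n := by
  have hfactor : poissonDiagonal y z n = Complex.exp (-n) * ((n + y) ^ n / n !) *
      (Complex.exp (-y * z) * (z * Complex.exp (1 - z)) ^ n) := by
    have hexp : Complex.exp (-(n + y) * z) =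
        Complex.exp (-n) * Complex.exp (-y * z) * Complex.exp (1 - z) ^ n := by
      rw [← Complex.exp_nat_mul, ← Complex.exp_add, ← Complex.exp_add]
      ring_nf
    rw [poissonDiagonal, hexp, mul_pow, mul_pow]
    ring
  have hcoeff : ‖Complex.exp (-n) * ((n + y) ^ n / n !)‖ ≤ Real.exp ‖y‖ := by
    have hnorm : ‖(n : ℂ) + y‖ ≤ n + ‖y‖ := by simpa using norm_add_le (n : ℂ) y
    calc ‖Complex.exp (-n) * ((n + y) ^ n / n !)‖
        = Real.exp (-n) * (‖(n : ℂ) + y‖ ^ n / n !) := by simp [Complex.norm_exp]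
      _ ≤ Real.exp (-n) * Real.exp (n + ‖y‖) := by
        gcongr
        exact (Real.pow_div_factorial_le_exp _ (norm_nonneg _) n).trans (Real.exp_le_exp.mpr hnorm)
      _ = Real.exp ‖y‖ := by rw [← Real.exp_add, neg_add_cancel_left]
  calc ‖poissonDiagonal y z n‖
      = ‖Complex.exp (-n) * ((n + y) ^ n / n !)‖ *
          (‖Complex.exp (-y * z)‖ * ‖z * Complex.exp (1 - z)‖ ^ n) := by
        rw [hfactor, norm_mul, norm_mul (Complex.exp (-y * z)), norm_pow]
    _ ≤ Real.exp ‖y‖ * (‖Complex.exp (-y * z)‖ * ‖z * Complex.exp (1 - z)‖ ^ n) := by gcongr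
    _ = _ := (mul_assoc ..).symm

theorem summable_poissonDiagonal (y : ℂ) {z : ℂ} (hz : ‖z * Complex.exp (1 - z)‖ < 1) :
    Summable (poissonDiagonal y z) :=
  .of_norm_bounded ((summable_geometric_of_lt_one (norm_nonneg _) hz).mul_left _)
    (norm_poissonDiagonal_le y z)

/-- The terms of the double series obtained from `∑ₙ poissonDiagonal y z n` by expanding the
exponential; the first index is `n`, the second the degree in the exponential series. -/
noncomputable def poissonDiagonalExpansion (y z : ℂ) (p : ℕ × ℕ) : ℂ :=
  ((p.1 + y) * z) ^ p.1 / p.1 ! * ((-((p.1 + y) * z)) ^ p.2 / p.2 !)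

theorem hasSum_poissonDiagonalExpansion_row (y z : ℂ) (n : ℕ) :
    HasSum (fun j ↦ poissonDiagonalExpansion y z (n, j)) (poissonDiagonal y z n) := by
  have hexp := NormedSpace.expSeries_div_hasSum_exp (-((n + y) * z))
  rw [← Complex.exp_eq_exp_ℂ] at hexp
  have hvalue : poissonDiagonal y z n =
      ((n + y) * z) ^ n / n ! * Complex.exp (-((n + y) * z)) := by
    rw [poissonDiagonal, neg_mul]
    ring
  simpa only [poissonDiagonalExpansion, hvalue] using
    hexp.mul_left (((n + y) * z) ^ n / (n ! : ℂ))

theorem hasSum_norm_poissonDiagonalExpansion_row (y z : ℂ) (n : ℕ) :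
    HasSum (fun j ↦ ‖poissonDiagonalExpansion y z (n, j)‖)
      (‖(n + y) * z‖ ^ n / n ! * Real.exp ‖(n + y) * z‖) := by
  have hexp := NormedSpace.expSeries_div_hasSum_exp ‖(n + y) * z‖
  rw [← Real.exp_eq_exp_ℝ] at hexp
  simpa only [poissonDiagonalExpansion, norm_mul, norm_div, norm_pow, norm_neg,
    Complex.norm_natCast] using hexp.mul_left (‖(n + y) * z‖ ^ n / (n ! : ℝ))

theorem norm_pow_div_factorial_mul_exp_norm_le_norm_poissonDiagonal (y z : ℂ) (n : ℕ) :
    ‖(n + y) * z‖ ^ n / n ! * Real.exp ‖(n + y) * z‖ ≤ ‖poissonDiagonal ‖y‖ (-‖z‖) n‖ := by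
  have hnorm : ‖(n + y) * z‖ ≤ (n + ‖y‖) * ‖z‖ := by
    rw [norm_mul]
    gcongr
    simpa using norm_add_le (n : ℂ) y
  have hvalue : ‖poissonDiagonal ‖y‖ (-‖z‖) n‖ =
      ((n + ‖y‖) * ‖z‖) ^ n / n ! * Real.exp ((n + ‖y‖) * ‖z‖) := by
    have hadd : ‖(n : ℂ) + (‖y‖ : ℂ)‖ = n + ‖y‖ := by
      rw [← Complex.ofReal_natCast, ← Complex.ofReal_add, Complex.norm_of_nonneg (by positivity)]
    have hre : (-((n : ℂ) + ‖y‖) * -‖z‖).re = (n + ‖y‖) * ‖z‖ := by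
      rw [neg_mul_neg]
      simp
    simp only [poissonDiagonal, norm_div, norm_mul, norm_pow, norm_neg, Complex.norm_exp, hre,
      hadd, Complex.norm_real, norm_norm, Complex.norm_natCast]
    ring
  rw [hvalue]
  gcongr

theorem summable_poissonDiagonalExpansion (y : ℂ) {z : ℂ}
    (hz : ‖z‖ * Real.exp (1 + ‖z‖) < 1) :
    Summable (poissonDiagonalExpansion y z) := by
  have hneg : ‖(-‖z‖ : ℂ) * Complex.exp (1 - -‖z‖)‖ < 1 := by
    simpa [Complex.norm_exp] using hz
  refine .of_norm ((summable_prod_of_nonneg fun _ ↦ norm_nonneg _).mpr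
    ⟨fun n ↦ (hasSum_norm_poissonDiagonalExpansion_row y z n).summable, ?_⟩)
  refine .of_nonneg_of_le (fun n ↦ tsum_nonneg fun _ ↦ norm_nonneg _) (fun n ↦ ?_)
    (summable_poissonDiagonal ‖y‖ hneg).norm
  rw [(hasSum_norm_poissonDiagonalExpansion_row y z n).tsum_eq]
  exact norm_pow_div_factorial_mul_exp_norm_le_norm_poissonDiagonal y z n

theorem hasSum_poissonDiagonal_of_small (y : ℂ) {z : ℂ}
    (hz : ‖z‖ * Real.exp (1 + ‖z‖) < 1) :
    HasSum (poissonDiagonal y z) (1 / (1 - z)) := by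
  have hz_lt_one : ‖z‖ < 1 :=
    (le_mul_of_one_le_right (norm_nonneg z) (Real.one_le_exp (by positivity))).trans_lt hz
  have hsum := (summable_poissonDiagonalExpansion y hz).hasSum
  have hdiag : HasSum (fun m ↦ z ^ m) (∑' p, poissonDiagonalExpansion y z p) := by
    simpa only [poissonDiagonalExpansion,
      sum_antidiagonal_pow_div_factorial_mul_neg_pow_div_factorial] using
      hasSum_sum_antidiagonal hsum
  rw [one_div, ← hdiag.unique (hasSum_geometric_of_norm_lt_one hz_lt_one)]
  exact hsum.prod_fiberwise (hasSum_poissonDiagonalExpansion_row y z)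

theorem eventually_hasSum_poissonDiagonal (y : ℂ) :
    ∀ᶠ z in 𝓝 0, HasSum (poissonDiagonal y z) (1 / (1 - z)) := by
  have hcont : Continuous fun z : ℂ ↦ ‖z‖ * Real.exp (1 + ‖z‖) := by fun_prop
  have hsmall : ∀ᶠ z : ℂ in 𝓝 0, ‖z‖ * Real.exp (1 + ‖z‖) < 1 :=
    hcont.continuousAt.eventually_lt_const (by simp)
  filter_upwards [hsmall] with z hz
  exact hasSum_poissonDiagonal_of_small y hz

/-- The region enclosed by the Szegő curve `|z e^{1-z}| = 1`, `|z| ≤ 1`. The condition `z.re < 1`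
selects the bounded one of the two components of `|z e^{1-z}| < 1`. -/
def szegoRegion : Set ℂ :=
  {z | z.re < 1 ∧ ‖z * Complex.exp (1 - z)‖ < 1}

theorem isOpen_szegoRegion : IsOpen szegoRegion :=
  (isOpen_lt Complex.continuous_re continuous_const).inter
    (isOpen_lt (f := fun z ↦ ‖z * Complex.exp (1 - z)‖) (by fun_prop) continuous_const)

theorem zero_mem_szegoRegion : 0 ∈ szegoRegion := by simp [szegoRegion]

theorem ofReal_mem_szegoRegion {x : ℝ} (hx0 : 0 ≤ x) (hx1 : x < 1) : (x : ℂ) ∈ szegoRegion := by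
  refine ⟨by simpa using hx1, ?_⟩
  have hlt : x < Real.exp (x - 1) := by
    simpa using Real.add_one_lt_exp (sub_ne_zero.mpr hx1.ne)
  calc ‖(x : ℂ) * Complex.exp (1 - x)‖ = x * Real.exp (1 - x) := by
        simp [Complex.norm_exp, abs_of_nonneg hx0]
    _ < Real.exp (x - 1) * Real.exp (1 - x) := by gcongr
    _ = 1 := by simp [← Real.exp_add]

theorem starConvex_szegoRegion : StarConvex ℝ 0 szegoRegion := by
  refine starConvex_zero_iff.mpr fun z ⟨hre, hnorm⟩ t ht0 ht1 ↦ ⟨?_, ?_⟩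
  · rw [Complex.smul_re, smul_eq_mul]
    rcases le_total z.re 0 with hneg | hpos <;> nlinarith
  have hfactor : t * Real.exp ((1 - t) * z.re) ≤ 1 := by
    have ht_le : t ≤ Real.exp (t - 1) := by simpa using Real.add_one_le_exp (t - 1)
    calc t * Real.exp ((1 - t) * z.re) ≤ Real.exp (t - 1) * Real.exp (1 - t) := by
          gcongr
          nlinarith
      _ = 1 := by simp [← Real.exp_add]
  calc ‖t • z * Complex.exp (1 - t • z)‖
      = t * Real.exp ((1 - t) * z.re) * ‖z * Complex.exp (1 - z)‖ := by
        have hexp : Real.exp (1 - t * z.re) =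
            Real.exp ((1 - t) * z.re) * Real.exp (1 - z.re) := by
          rw [← Real.exp_add]
          ring_nf
        simp only [norm_mul, norm_smul, Complex.norm_exp, Complex.sub_re, Complex.one_re,
          Complex.smul_re, smul_eq_mul, Real.norm_of_nonneg ht0, hexp]
        ring
    _ ≤ ‖z * Complex.exp (1 - z)‖ := mul_le_of_le_one_left (norm_nonneg _) hfactor
    _ < 1 := hnorm

theorem isPreconnected_szegoRegion : IsPreconnected szegoRegion :=
  (starConvex_szegoRegion.isPathConnected zero_mem_szegoRegion).isConnected.isPreconnected

theorem differentiableAt_tsum_poissonDiagonal (y : ℂ) {z : ℂ}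
    (hz : ‖z * Complex.exp (1 - z)‖ < 1) :
    DifferentiableAt ℂ (fun w ↦ ∑' n, poissonDiagonal y w n) z := by
  obtain ⟨q, hzq, hq1⟩ := exists_between hz
  obtain ⟨B, hzB⟩ := exists_gt ‖Complex.exp (-y * z)‖
  let V : Set ℂ := {w | ‖w * Complex.exp (1 - w)‖ < q ∧ ‖Complex.exp (-y * w)‖ < B}
  have hV : IsOpen V :=
    (isOpen_lt (f := fun w ↦ ‖w * Complex.exp (1 - w)‖) (by fun_prop) continuous_const).inter
      (isOpen_lt (f := fun w ↦ ‖Complex.exp (-y * w)‖) (by fun_prop) continuous_const)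
  have hgeom : Summable fun n : ℕ ↦ Real.exp ‖y‖ * B * q ^ n :=
    (summable_geometric_of_lt_one ((norm_nonneg _).trans hzq.le) hq1).mul_left _
  refine (Complex.differentiableOn_tsum_of_summable_norm hgeom (fun n ↦ ?_) hV
    fun n w hw ↦ ?_).differentiableAt (hV.mem_nhds ⟨hzq, hzB⟩)
  · unfold poissonDiagonal
    fun_prop
  · have hB : 0 ≤ B := (norm_nonneg _).trans hzB.le
    refine (norm_poissonDiagonal_le y w n).trans ?_
    gcongr
    exacts [hw.2.le, hw.1.le]

theorem tsum_poissonDiagonal_eqOn_szegoRegion (y : ℂ) :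
    Set.EqOn (fun z ↦ ∑' n, poissonDiagonal y z n) (fun z ↦ 1 / (1 - z)) szegoRegion := by
  have hseries : DifferentiableOn ℂ (fun z ↦ ∑' n, poissonDiagonal y z n) szegoRegion :=
    fun z hz ↦ (differentiableAt_tsum_poissonDiagonal y hz.2).differentiableWithinAt
  have hgeom : DifferentiableOn ℂ (fun z : ℂ ↦ 1 / (1 - z)) szegoRegion := by
    have hne : ∀ z ∈ szegoRegion, 1 - z ≠ 0 := by
      rintro z hz hz1
      obtain rfl : 1 = z := sub_eq_zero.mp hz1
      exact hz.1.ne Complex.one_re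
    exact (differentiableOn_const 1).fun_div (by fun_prop) hne
  exact (hseries.analyticOnNhd isOpen_szegoRegion).eqOn_of_preconnected_of_eventuallyEq
    (hgeom.analyticOnNhd isOpen_szegoRegion) isPreconnected_szegoRegion zero_mem_szegoRegion
    ((eventually_hasSum_poissonDiagonal y).mono fun _ hz ↦ hz.tsum_eq)

theorem borel_mean_general (y : ℂ) {z : ℂ} (hz : z ∈ szegoRegion) :
    HasSum (poissonDiagonal y z) (1 / (1 - z)) :=
  (summable_poissonDiagonal y hz.2).hasSum_iff.mpr (tsum_poissonDiagonal_eqOn_szegoRegion y hz)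

theorem ofReal_succ_mul_borelWeight (μ : ℝ) (n : ℕ) :
    (((n + 1) * borelWeight μ n : ℝ) : ℂ) = poissonDiagonal 1 μ n := by
  rw [borelWeight, poissonDiagonal, Nat.factorial_succ]
  push_cast
  field_simp

/-- For `0 < μ < 1`, the series `Σ_{k=1}^∞ k·e^{-kμ}(kμ)^{k-1}/k!` converges with sum
`1/(1-μ)`: the Borel(μ) distribution has mean `1/(1-μ)`. -/
theorem borel_mean (μ : ℝ) (hμ0 : 0 < μ) (hμ1 : μ < 1) :
    HasSum (fun n : ℕ => ((n : ℝ) + 1) * borelWeight μ n) (1 / (1 - μ)) := by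
  rw [← Complex.hasSum_ofReal]
  simpa only [ofReal_succ_mul_borelWeight, Complex.ofReal_div, Complex.ofReal_sub,
    Complex.ofReal_one] using borel_mean_general 1 (ofReal_mem_szegoRegion hμ0.le hμ1)
end

section
/- Let 0 < μ < 1 and θ₀(μ) = μ − 1 − log μ. Then the sequence k ↦ k·e^{θ₀(μ)k}·e^{−kμ}(kμ)^{k−1}/k! (k ≥ 1) is NOT summable; equivalently E[S e^{θ₀(μ)S}] = ∞ for S Borel(μ)-distributed. (This is the essential smoothness of θ ↦ E[e^{θS}]; the proof uses that e^{−k}k^k/k! ∼ 1/√(2πk) by Stirling's formula.) -/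
/-!
At `θ = θ₀(μ)` the exponential tilt cancels the geometric decay of the Borel weights exactly:
`μ e^{θ₀(μ) - μ} = e⁻¹`, so that `μ · k e^{θ₀(μ) k} p_μ(k) = (k / e)^k / k!`. By Stirling's formula
this is asymptotic to `1 / √(2πk)`, whose series diverges.
-/

open Real Asymptotics Filter
open scoped Nat

theorem div_exp_one_pow_div_factorial_isEquivalent :
    (fun n : ℕ ↦ (n / exp 1) ^ n / (n ! : ℝ)) ~[atTop] fun n ↦ (√(2 * n * π))⁻¹ := by
  have stirling := (IsEquivalent.refl (u := fun n : ℕ ↦ ((n : ℝ) / exp 1) ^ n)).div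
    Stirling.factorial_isEquivalent_stirling
  refine stirling.congr_right (Eventually.of_forall fun n ↦ ?_)
  have stirling_pow_ne_zero : ((n : ℝ) / exp 1) ^ n ≠ 0 := by
    rcases eq_or_ne n 0 with rfl | hn
    · simp
    · positivity
  exact div_mul_cancel_right₀ stirling_pow_ne_zero _

theorem not_summable_inv_sqrt_mul_natCast {c : ℝ} (hc : 0 < c) :
    ¬ Summable fun n : ℕ ↦ (√(c * n))⁻¹ := by
  simp only [sqrt_mul hc.le, mul_inv]
  rw [summable_mul_left_iff (by positivity)]
  simp only [sqrt_eq_rpow]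
  rw [summable_nat_rpow_inv]
  norm_num

theorem not_summable_div_exp_one_pow_div_factorial :
    ¬ Summable fun n : ℕ ↦ (n / exp 1) ^ n / (n ! : ℝ) := by
  rw [div_exp_one_pow_div_factorial_isEquivalent.summable_iff_nat]
  simpa only [mul_right_comm] using not_summable_inv_sqrt_mul_natCast two_pi_pos

theorem mul_add_one_mul_exp_mul_borelWeight (μ θ : ℝ) (n : ℕ) :
    μ * ((n + 1) * exp (θ * (n + 1)) * borelWeight μ n) =
      (μ * exp (θ - μ) * (n + 1)) ^ (n + 1) / (n + 1)! := by
  have exp_pow : exp (θ - μ) ^ (n + 1) = exp (θ * (n + 1)) * exp (-((n : ℝ) + 1) * μ) := by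
    rw [← exp_nat_mul, ← exp_add]
    push_cast
    ring_nf
  simp only [borelWeight, mul_pow, exp_pow]
  ring

theorem mul_exp_sub_one_sub_log_sub_self {μ : ℝ} (hμ : 0 < μ) :
    μ * exp (μ - 1 - log μ - μ) = (exp 1)⁻¹ := by
  rw [show μ - 1 - log μ - μ = -1 - log μ by ring, exp_sub, exp_log hμ,
    mul_div_cancel₀ _ hμ.ne', exp_neg]

theorem borel_S_expMoment_at_boundary_not_summable_general {μ : ℝ} (hμ : 0 < μ) :
    ¬ Summable fun n : ℕ ↦
      ((n : ℝ) + 1) * exp ((μ - 1 - log μ) * ((n : ℝ) + 1)) * borelWeight μ n := by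
  rw [← summable_mul_left_iff hμ.ne']
  simp only [mul_add_one_mul_exp_mul_borelWeight, mul_exp_sub_one_sub_log_sub_self hμ,
    inv_mul_eq_div]
  have tail := (summable_nat_add_iff 1).not.mpr not_summable_div_exp_one_pow_div_factorial
  exact_mod_cast tail

/-- For `0 < μ < 1` and `θ₀(μ) = μ - 1 - log μ`, the sequence
`k ↦ k e^{θ₀(μ)k} p_μ(k)` (for `k ≥ 1`) is not summable, i.e.
`E[S e^{θ₀(μ)S}] = ∞` for `S` Borel(μ)-distributed (essential smoothness). -/
theorem borel_S_expMoment_at_boundary_not_summable (μ : ℝ) (hμ0 : 0 < μ) (hμ1 : μ < 1) :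
    ¬ Summable (fun n : ℕ =>
      ((n : ℝ) + 1) * Real.exp ((μ - 1 - Real.log μ) * ((n : ℝ) + 1)) * borelWeight μ n) :=
  borel_S_expMoment_at_boundary_not_summable_general hμ0
end

section
/- Let 0 < μ < 1, θ₀(μ) = μ − 1 − log μ, φ_μ(θ) = Σ_{k=1}^∞ e^{θk}·e^{−kμ}(kμ)^{k−1}/k! and ψ_μ(θ) = Σ_{k=1}^∞ k·e^{θk}·e^{−kμ}(kμ)^{k−1}/k!. Then for every θ < θ₀(μ): μ·φ_μ(θ) < 1 and ψ_μ(θ) = φ_μ(θ)/(1 − μ·φ_μ(θ)). -/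
/-- `φ_μ(θ) = Σ_{k=1}^∞ e^{θk} p_μ(k)`. -/
noncomputable def borelPhi (μ θ : ℝ) : ℝ :=
  ∑' n : ℕ, Real.exp (θ * ((n : ℝ) + 1)) * borelWeight μ n

/-- `ψ_μ(θ) = Σ_{k=1}^∞ k e^{θk} p_μ(k)`. -/
noncomputable def borelPsi (μ θ : ℝ) : ℝ :=
  ∑' n : ℕ, ((n : ℝ) + 1) * Real.exp (θ * ((n : ℝ) + 1)) * borelWeight μ n

/-!
With `x = μ e^{θ-μ}`, both Borel sums are power series in `x`: `μ φ_μ(θ) = T(x)`, where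
`T(x) = ∑ k^{k-1} x^k / k!` is Cayley's tree function, and `1 + μ ψ_μ(θ) = ∑ k^k x^k / k!`; the
condition `θ < θ₀(μ)` says `x < e⁻¹`, inside the disc of convergence. Abel's generalization of the
binomial theorem, at the level of coefficients, gives `(∑ k^k x^k / k!) (1 - T(x)) = 1`, which is
the claimed identity. The coefficients are nonnegative, so for `x ≥ 0` the same identity forces
`T(x) < 1`.
-/

open Finset
open scoped Nat

theorem sum_neg_one_pow_mul_choose_succ_mul_succ_pow {R : Type*} [CommRing R] (m : ℕ) :
    ∑ k ∈ range (m + 1), (-1 : R) ^ (m - k) * (m + 1).choose (k + 1) * ((k : R) + 1) ^ m =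
      0 ^ m := by
  have fwdDiff_eq_zero := congrFun (fwdDiff_iter_pow_eq_zero_of_lt (R := R) m.lt_succ_self) 0
  rw [fwdDiff_iter_eq_sum_shift, sum_range_succ'] at fwdDiff_eq_zero
  have sum_add_eq_zero :
      ∑ k ∈ range (m + 1), (-1 : R) ^ (m - k) * (m + 1).choose (k + 1) * ((k : R) + 1) ^ m +
        (-1) ^ (m + 1) * 0 ^ m = 0 := by
    simpa using fwdDiff_eq_zero
  obtain rfl | hm := eq_or_ne m 0
  · simp
  · simpa [hm] using sum_add_eq_zero

theorem choose_succ_mul_choose_sub {n k i : ℕ} (h : k + i ≤ n) :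
    (n + 1).choose (k + 1) * (n - k).choose i =
      (n + 1).choose i * (n - i + 1).choose (k + 1) := by
  calc (n + 1).choose (k + 1) * (n - k).choose i
      = (n + 1).choose (n - k) * (n - k).choose i := by
        rw [← Nat.choose_symm_of_eq_add (by lia : n + 1 = n - k + (k + 1))]
    _ = (n + 1).choose i * (n + 1 - i).choose (n - k - i) := Nat.choose_mul (by lia)
    _ = (n + 1).choose i * (n - i + 1).choose (k + 1) := by
        rw [show n + 1 - i = n - i + 1 by lia,
          Nat.choose_symm_of_eq_add (by lia : n - i + 1 = n - k - i + (k + 1))]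

theorem abel_binomial {R : Type*} [CommRing R] (n : ℕ) (y : R) :
    ∑ k ∈ range (n + 1),
      ((n + 1).choose (k + 1) : R) * ((k : R) + 1) ^ k * (y - (k + 1)) ^ (n - k) =
      (n + 1) * y ^ n := by
  -- Expanding in powers of `y`, the coefficient of `y ^ i` is, up to its term at `t = 0`, an
  -- `(n - i + 1)`-st finite difference of `t ^ (n - i)`.
  have expand_term : ∀ k ∈ range (n + 1),
      ((n + 1).choose (k + 1) : R) * ((k : R) + 1) ^ k * (y - (k + 1)) ^ (n - k) =
        ∑ i ∈ range (n - k + 1), (n + 1).choose i * y ^ i *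
          ((-1) ^ (n - i - k) * (n - i + 1).choose (k + 1) * ((k : R) + 1) ^ (n - i)) := by
    intro k _
    rw [sub_eq_add_neg, add_pow y, mul_sum]
    refine sum_congr rfl fun i hi => ?_
    have hki : k + i ≤ n := by grind
    have choose_eq : ((n + 1).choose (k + 1) * (n - k).choose i : R) =
        (n + 1).choose i * (n - i + 1).choose (k + 1) :=
      mod_cast congrArg (Nat.cast (R := R)) (choose_succ_mul_choose_sub hki)
    rw [neg_pow, show n - k - i = n - i - k by lia,
      show ((k : R) + 1) ^ (n - i) = (k + 1) ^ k * (k + 1) ^ (n - i - k) by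
        rw [← pow_add, Nat.add_sub_cancel' (by lia)]]
    linear_combination
      ((k : R) + 1) ^ k * y ^ i * (-1) ^ (n - i - k) * (k + 1) ^ (n - i - k) * choose_eq
  rw [sum_congr rfl expand_term]
  calc ∑ k ∈ range (n + 1), ∑ i ∈ range (n - k + 1), (n + 1).choose i * y ^ i *
          ((-1) ^ (n - i - k) * (n - i + 1).choose (k + 1) * ((k : R) + 1) ^ (n - i))
      = ∑ i ∈ range (n + 1), ∑ k ∈ range (n - i + 1), (n + 1).choose i * y ^ i *
          ((-1) ^ (n - i - k) * (n - i + 1).choose (k + 1) * ((k : R) + 1) ^ (n - i)) := by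
        refine sum_comm' fun k i => ?_
        simp only [mem_range]
        lia
    _ = ∑ i ∈ range (n + 1), (n + 1).choose i * y ^ i * 0 ^ (n - i) := by
        simp_rw [← mul_sum, sum_neg_one_pow_mul_choose_succ_mul_succ_pow]
    _ = (n + 1) * y ^ n := by
        rw [sum_eq_single_of_mem n (self_mem_range_succ n) fun i hi hin => ?_]
        · simp
        · rw [zero_pow (by grind), mul_zero]

theorem sum_choose_succ_mul_pow_mul_sub_pow (n : ℕ) :
    ∑ k ∈ range (n + 1), (n + 1).choose (k + 1) * (k + 1) ^ k * (n - k) ^ (n - k) =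
      (n + 1) ^ (n + 1) := by
  have abel_at_succ := abel_binomial n ((n : ℤ) + 1)
  rw [← pow_succ'] at abel_at_succ
  zify
  rw [← abel_at_succ]
  refine sum_congr rfl fun k hk => ?_
  rw [Nat.cast_sub (mem_range_succ_iff.mp hk), add_sub_add_right_eq_sub]

section TreeFunction

variable {𝕜 : Type*} [RCLike 𝕜]

/-- `T(x) / x` for Cayley's tree function `T(x) = ∑_{k ≥ 1} k^{k-1} x^k / k!`, the exponential
generating function of rooted labelled trees; the sum is indexed by `n = k - 1`. -/
noncomputable def treeSeries (x : 𝕜) : 𝕜 :=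
  ∑' n : ℕ, ((n : 𝕜) + 1) ^ n / (n + 1)! * x ^ n

/-- The series `∑ (n + r)^n x^n / n!`, with the convention `0 ^ 0 = 1`. The Borel sum `ψ` is a
multiple of the case `r = 1`, which is also the shift of the case `r = 0`. -/
noncomputable def abelSeries (r : ℕ) (x : 𝕜) : 𝕜 :=
  ∑' n : ℕ, ((n : 𝕜) + r) ^ n / n ! * x ^ n

theorem norm_abelSeries_term (r n : ℕ) (x : 𝕜) :
    ‖((n : 𝕜) + r) ^ n / n ! * x ^ n‖ = ((n : ℝ) + r) ^ n / n ! * ‖x‖ ^ n := by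
  rw [← Nat.cast_add, norm_mul, norm_div, norm_pow, norm_pow, RCLike.norm_natCast,
    RCLike.norm_natCast, Nat.cast_add]

theorem norm_treeSeries_term (n : ℕ) (x : 𝕜) :
    ‖((n : 𝕜) + 1) ^ n / (n + 1)! * x ^ n‖ = ((n : ℝ) + 1) ^ n / (n + 1)! * ‖x‖ ^ n := by
  rw [← Nat.cast_succ, norm_mul, norm_div, norm_pow, norm_pow, RCLike.norm_natCast,
    RCLike.norm_natCast, Nat.cast_succ]

variable {x : 𝕜}

theorem summable_norm_abelSeries (r : ℕ) (hx : ‖x‖ < Real.exp (-1)) :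
    Summable fun n : ℕ => ‖((n : 𝕜) + r) ^ n / n ! * x ^ n‖ := by
  have ratio_lt_one : Real.exp 1 * ‖x‖ < 1 := by
    calc Real.exp 1 * ‖x‖ < Real.exp 1 * Real.exp (-1) := by gcongr
      _ = 1 := by rw [← Real.exp_add, add_neg_cancel, Real.exp_zero]
  refine .of_nonneg_of_le (fun _ => norm_nonneg _) (fun n => ?_)
    ((summable_geometric_of_lt_one (by positivity) ratio_lt_one).mul_left (Real.exp r))
  calc ‖((n : 𝕜) + r) ^ n / n ! * x ^ n‖ = ((n : ℝ) + r) ^ n / n ! * ‖x‖ ^ n :=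
        norm_abelSeries_term r n x
    _ ≤ Real.exp (n + r) * ‖x‖ ^ n := by
        gcongr
        exact Real.pow_div_factorial_le_exp _ (by positivity) n
    _ = Real.exp r * (Real.exp 1 * ‖x‖) ^ n := by
        rw [mul_pow, Real.exp_one_pow, Real.exp_add]
        ring

theorem summable_norm_treeSeries (hx : ‖x‖ < Real.exp (-1)) :
    Summable fun n : ℕ => ‖((n : 𝕜) + 1) ^ n / (n + 1)! * x ^ n‖ := by
  refine .of_nonneg_of_le (fun _ => norm_nonneg _) (fun n => ?_) (summable_norm_abelSeries 1 hx)
  rw [norm_treeSeries_term, norm_abelSeries_term, Nat.cast_one]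
  gcongr
  exact n.le_succ

theorem abelSeries_zero_eq_one_add (hx : ‖x‖ < Real.exp (-1)) :
    abelSeries 0 x = 1 + x * abelSeries 1 x := by
  rw [abelSeries, (summable_norm_abelSeries 0 hx).of_norm.tsum_eq_zero_add, abelSeries,
    ← tsum_mul_left]
  congr 1
  · simp
  · refine tsum_congr fun n => ?_
    rw [Nat.factorial_succ]
    push_cast
    field_simp
    ring

theorem sum_treeSeries_term_mul_abelSeries_term (n : ℕ) (x : 𝕜) :
    ∑ k ∈ range (n + 1), (((k : 𝕜) + 1) ^ k / (k + 1)! * x ^ k) *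
        ((((n - k : ℕ) : 𝕜) + (0 : ℕ)) ^ (n - k) / (n - k)! * x ^ (n - k)) =
      ((n : 𝕜) + (1 : ℕ)) ^ n / n ! * x ^ n := by
  have coeff_eq : ((n : 𝕜) + (1 : ℕ)) ^ n / n ! = ((n + 1) ^ (n + 1) : ℕ) / (n + 1)! := by
    rw [Nat.factorial_succ]
    push_cast
    field_simp
    rw [pow_succ']
  rw [coeff_eq, ← sum_choose_succ_mul_pow_mul_sub_pow, Nat.cast_sum, sum_div, sum_mul]
  refine sum_congr rfl fun k hk => ?_
  have hkn : k ≤ n := mem_range_succ_iff.mp hk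
  have factorial_ne_zero : ((n + 1)! : 𝕜) ≠ 0 := mod_cast (n + 1).factorial_ne_zero
  rw [← pow_mul_pow_sub x hkn, Nat.cast_mul, Nat.cast_mul,
    Nat.cast_choose 𝕜 (Nat.add_le_add_right hkn 1), Nat.add_sub_add_right]
  push_cast
  field_simp
  ring

theorem treeSeries_mul_abelSeries_zero (hx : ‖x‖ < Real.exp (-1)) :
    treeSeries x * abelSeries 0 x = abelSeries 1 x := by
  rw [treeSeries, abelSeries, tsum_mul_tsum_eq_tsum_sum_range_of_summable_norm (R := 𝕜)
    (summable_norm_treeSeries hx) (summable_norm_abelSeries 0 hx), abelSeries]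
  exact tsum_congr fun n => sum_treeSeries_term_mul_abelSeries_term n x

theorem abelSeries_zero_mul_one_sub (hx : ‖x‖ < Real.exp (-1)) :
    abelSeries 0 x * (1 - x * treeSeries x) = 1 := by
  linear_combination
    abelSeries_zero_eq_one_add hx - x * treeSeries_mul_abelSeries_zero hx

theorem abelSeries_one_mul_one_sub (hx : ‖x‖ < Real.exp (-1)) :
    abelSeries 1 x * (1 - x * treeSeries x) = treeSeries x := by
  rw [← treeSeries_mul_abelSeries_zero hx, mul_assoc, abelSeries_zero_mul_one_sub hx, mul_one]

theorem mul_treeSeries_lt_one {t : ℝ} (ht : 0 ≤ t) (ht_lt : t < Real.exp (-1)) :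
    t * treeSeries t < 1 := by
  have abelSeries_nonneg : 0 ≤ abelSeries 0 t := tsum_nonneg fun n => by positivity
  have mul_eq_one := abelSeries_zero_mul_one_sub (x := t) (by rwa [Real.norm_of_nonneg ht])
  have mul_pos : 0 < abelSeries 0 t * (1 - t * treeSeries t) := mul_eq_one.symm ▸ one_pos
  exact sub_pos.mp (pos_of_mul_pos_right mul_pos abelSeries_nonneg)

theorem norm_treeSeries_le (hx : ‖x‖ < Real.exp (-1)) : ‖treeSeries x‖ ≤ treeSeries ‖x‖ := by
  simp_rw [treeSeries, ← norm_treeSeries_term]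
  exact norm_tsum_le_tsum_norm (summable_norm_treeSeries hx)

theorem norm_mul_treeSeries_lt_one (hx : ‖x‖ < Real.exp (-1)) : ‖x * treeSeries x‖ < 1 :=
  calc ‖x * treeSeries x‖ = ‖x‖ * ‖treeSeries x‖ := norm_mul _ _
    _ ≤ ‖x‖ * treeSeries ‖x‖ := by gcongr; exact norm_treeSeries_le hx
    _ < 1 := mul_treeSeries_lt_one (norm_nonneg x) hx

end TreeFunction

theorem exp_mul_borelWeight (μ θ : ℝ) (n : ℕ) :
    Real.exp (θ * ((n : ℝ) + 1)) * borelWeight μ n =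
      Real.exp (θ - μ) * (((n : ℝ) + 1) ^ n / (n + 1)! * (μ * Real.exp (θ - μ)) ^ n) := by
  have exp_mul_exp : Real.exp (θ * ((n : ℝ) + 1)) * Real.exp (-((n : ℝ) + 1) * μ) =
      Real.exp (θ - μ) * Real.exp (θ - μ) ^ n := by
    rw [← pow_succ', ← Real.exp_nat_mul, ← Real.exp_add]
    push_cast
    ring_nf
  rw [borelWeight, mul_pow, mul_pow]
  linear_combination ((n : ℝ) + 1) ^ n * μ ^ n / (n + 1)! * exp_mul_exp

theorem borelPhi_eq_treeSeries (μ θ : ℝ) :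
    borelPhi μ θ = Real.exp (θ - μ) * treeSeries (μ * Real.exp (θ - μ)) := by
  rw [borelPhi, treeSeries, ← tsum_mul_left]
  exact tsum_congr (exp_mul_borelWeight μ θ)

theorem borelPsi_eq_abelSeries (μ θ : ℝ) :
    borelPsi μ θ = Real.exp (θ - μ) * abelSeries 1 (μ * Real.exp (θ - μ)) := by
  rw [borelPsi, abelSeries, ← tsum_mul_left]
  refine tsum_congr fun n => ?_
  rw [mul_assoc, exp_mul_borelWeight, Nat.factorial_succ]
  push_cast
  field_simp

theorem abs_mul_exp_sub_lt_exp_neg_one {μ θ : ℝ} (hμ : 0 < μ) (hθ : θ < μ - 1 - Real.log μ) :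
    |μ * Real.exp (θ - μ)| < Real.exp (-1) := by
  calc |μ * Real.exp (θ - μ)| = Real.exp (Real.log μ + (θ - μ)) := by
        rw [abs_of_pos (by positivity), Real.exp_add, Real.exp_log hμ]
    _ < Real.exp (-1) := Real.exp_lt_exp.mpr (by linarith)

theorem borelPsi_eq_general {μ θ : ℝ} (h : |μ * Real.exp (θ - μ)| < Real.exp (-1)) :
    |μ * borelPhi μ θ| < 1 ∧ borelPsi μ θ = borelPhi μ θ / (1 - μ * borelPhi μ θ) := by
  have hx : ‖μ * Real.exp (θ - μ)‖ < Real.exp (-1) := h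
  have mul_borelPhi_eq :
      μ * borelPhi μ θ = μ * Real.exp (θ - μ) * treeSeries (μ * Real.exp (θ - μ)) := by
    rw [borelPhi_eq_treeSeries, mul_assoc]
  have abs_lt_one : |μ * borelPhi μ θ| < 1 := by
    rw [mul_borelPhi_eq]
    exact norm_mul_treeSeries_lt_one hx
  refine ⟨abs_lt_one, ?_⟩
  rw [eq_div_iff (sub_pos.mpr (lt_of_abs_lt abs_lt_one)).ne', mul_borelPhi_eq,
    borelPsi_eq_abelSeries, mul_assoc, abelSeries_one_mul_one_sub hx, borelPhi_eq_treeSeries]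

/-- For `0 < μ < 1` and `θ < θ₀(μ) = μ - 1 - log μ`: `μ φ_μ(θ) < 1` and
`ψ_μ(θ) = φ_μ(θ)/(1 - μ φ_μ(θ))`. -/
theorem borelPsi_eq (μ θ : ℝ) (hμ0 : 0 < μ) (hμ1 : μ < 1)
    (hθ : θ < μ - 1 - Real.log μ) :
    μ * borelPhi μ θ < 1 ∧
      borelPsi μ θ = borelPhi μ θ / (1 - μ * borelPhi μ θ) :=
  (borelPsi_eq_general (abs_mul_exp_sub_lt_exp_neg_one hμ0 hθ)).imp_left lt_of_abs_lt
end

section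
/- Let 0 < μ < 1, θ₀(μ) = μ − 1 − log μ, ψ_μ(θ) = Σ_{k=1}^∞ k·e^{θk}·e^{−kμ}(kμ)^{k−1}/k!, and let ν > 0 and x > 0. Then there exists a unique θ_x ∈ (−∞, θ₀(μ)) such that ψ_μ(θ_x) = x/ν. -/
/-!
Put `a k = (k / e) ^ k / k!` and `z = exp (θ - θ₀)`. The terms of the two series match, so that
`1 + μ ψ_μ(θ) = ∑ a k z ^ k`, and `θ < θ₀` means `0 < z < 1`. The coefficients satisfy
`0 < a k ≤ 1`, so the power series converges on `[0, 1)`, and `a k ~ 1 / √(2πk)` by Stirling's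
formula, so it diverges at `1`. A power series with nonnegative coefficients which diverges at the
end `R` of its interval of convergence increases continuously and strictly from `a 0` to `∞` on
`(0, R)`.
-/

open Set Filter Topology Asymptotics Real
open scoped Nat

section NonnegPowerSeries

variable {a : ℕ → ℝ} {r s R : ℝ}

theorem continuousOn_tsum_mul_pow (hr : Summable fun n ↦ a n * r ^ n) :
    ContinuousOn (fun x ↦ ∑' n, a n * x ^ n) (Icc (-|r|) |r|) := by
  refine continuousOn_tsum (fun n ↦ by fun_prop) hr.abs fun n x hx ↦ ?_
  rw [norm_eq_abs, abs_mul, abs_mul, abs_pow, abs_pow]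
  exact mul_le_mul_of_nonneg_left (pow_le_pow_left₀ (abs_nonneg x) (abs_le.2 hx) n) (abs_nonneg _)

theorem continuousOn_tsum_mul_pow_Ico (hsum : ∀ r ∈ Ico 0 R, Summable fun n ↦ a n * r ^ n) :
    ContinuousOn (fun x ↦ ∑' n, a n * x ^ n) (Ico 0 R) := by
  rintro x ⟨hx0, hxR⟩
  obtain ⟨r, hxr, hrR⟩ := exists_between hxR
  have hr0 : 0 < r := hx0.trans_lt hxr
  have hcont := continuousOn_tsum_mul_pow (hsum r ⟨hr0.le, hrR⟩)
  rw [abs_of_pos hr0] at hcont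
  exact (hcont.continuousAt (Icc_mem_nhds (by linarith) hxr)).continuousWithinAt

theorem tsum_mul_pow_lt_tsum_mul_pow (ha : ∀ n, 0 ≤ a n) {k : ℕ} (hk : k ≠ 0) (hak : 0 < a k)
    (hr : 0 ≤ r) (hrs : r < s) (hs : Summable fun n ↦ a n * s ^ n) :
    ∑' n, a n * r ^ n < ∑' n, a n * s ^ n := by
  refine hs.tsum_lt_tsum_of_nonneg (i := k) (fun n ↦ mul_nonneg (ha n) (pow_nonneg hr n))
    (fun n ↦ ?_) ?_
  · have := ha n
    gcongr
  · gcongr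

theorem exists_pos_of_not_summable_mul_pow (ha : ∀ n, 0 ≤ a n)
    (hdiv : ¬ Summable fun n ↦ a n * R ^ n) : ∃ k ≠ 0, 0 < a k := by
  by_contra! h
  refine hdiv (summable_of_ne_finset_zero (s := {0}) fun n hn ↦ ?_)
  rw [(h n (by simpa using hn)).antisymm (ha n), zero_mul]

theorem tendsto_tsum_mul_pow_atTop (ha : ∀ n, 0 ≤ a n) (hR : 0 < R)
    (hsum : ∀ r ∈ Ico 0 R, Summable fun n ↦ a n * r ^ n)
    (hdiv : ¬ Summable fun n ↦ a n * R ^ n) :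
    Tendsto (fun x ↦ ∑' n, a n * x ^ n) (𝓝[<] R) atTop := by
  refine tendsto_atTop.2 fun y ↦ ?_
  obtain ⟨N, hN⟩ : ∃ N, y < ∑ n ∈ Finset.range N, a n * R ^ n :=
    (((not_summable_iff_tendsto_nat_atTop_of_nonneg fun n ↦
      mul_nonneg (ha n) (pow_nonneg hR.le n)).1 hdiv).eventually_gt_atTop y).exists
  have hcont : Continuous fun x ↦ ∑ n ∈ Finset.range N, a n * x ^ n := by fun_prop
  filter_upwards [nhdsWithin_le_nhds (hcont.continuousAt.eventually_const_lt hN),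
    Ioo_mem_nhdsLT hR] with x hyx hx
  exact hyx.le.trans <| (hsum x ⟨hx.1.le, hx.2⟩).sum_le_tsum _ fun n _ ↦
    mul_nonneg (ha n) (pow_nonneg hx.1.le n)

theorem bijOn_tsum_mul_pow (ha : ∀ n, 0 ≤ a n) (hR : 0 < R)
    (hsum : ∀ r ∈ Ico 0 R, Summable fun n ↦ a n * r ^ n)
    (hdiv : ¬ Summable fun n ↦ a n * R ^ n) :
    BijOn (fun x ↦ ∑' n, a n * x ^ n) (Ioo 0 R) (Ioi (a 0)) := by
  obtain ⟨k, hk, hak⟩ := exists_pos_of_not_summable_mul_pow ha hdiv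
  have hmono : StrictMonoOn (fun x ↦ ∑' n, a n * x ^ n) (Ico 0 R) := fun r hr s hs hrs ↦
    tsum_mul_pow_lt_tsum_mul_pow ha hk hak hr.1 hrs (hsum s hs)
  have hcont := continuousOn_tsum_mul_pow_Ico hsum
  have hzero : ∑' n, a n * 0 ^ n = a 0 := by
    rw [tsum_eq_single 0 fun n hn ↦ by rw [zero_pow hn, mul_zero], pow_zero, mul_one]
  have h0 : (0 : ℝ) ∈ Ico 0 R := ⟨le_rfl, hR⟩
  refine ⟨fun x hx ↦ ?_, (hmono.mono Ioo_subset_Ico_self).injOn, fun y hy ↦ ?_⟩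
  · exact hzero.symm.trans_lt (hmono h0 (Ioo_subset_Ico_self hx) hx.1)
  · obtain ⟨x, hx, rfl⟩ : y ∈ (fun x ↦ ∑' n, a n * x ^ n) '' Ico 0 R :=
      isPreconnected_Ico.intermediate_value_Ici h0 (le_principal_iff.2 (Ico_mem_nhdsLT hR)) hcont
        (tendsto_tsum_mul_pow_atTop ha hR hsum hdiv) (hzero.trans_le (mem_Ioi.1 hy).le)
    have hx0 : x ≠ 0 := by
      rintro rfl
      exact (mem_Ioi.1 hy).ne' hzero
    exact ⟨x, ⟨hx.1.lt_of_ne' hx0, hx.2⟩, rfl⟩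

end NonnegPowerSeries

/-- The mass `e ^ (-k) k ^ k / k!` which the Poisson distribution of mean `k` gives to `k`, written
in the form that appears in Stirling's formula; at `k = 0` it is `1`. -/
noncomputable def poissonCentralMass (k : ℕ) : ℝ := (k / exp 1) ^ k / k !

theorem poissonCentralMass_zero : poissonCentralMass 0 = 1 := by
  simp [poissonCentralMass]

theorem poissonCentralMass_nonneg (k : ℕ) : 0 ≤ poissonCentralMass k := by
  unfold poissonCentralMass
  positivity

theorem poissonCentralMass_le_one (k : ℕ) : poissonCentralMass k ≤ 1 := by
  have h : (k : ℝ) ^ k / k ! ≤ exp 1 ^ k := by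
    simpa only [exp_one_pow] using pow_div_factorial_le_exp (k : ℝ) k.cast_nonneg k
  rw [poissonCentralMass, div_pow, div_right_comm]
  exact div_le_one_of_le₀ h (by positivity)

theorem summable_poissonCentralMass_mul_pow {r : ℝ} (hr : r ∈ Ico 0 1) :
    Summable fun k ↦ poissonCentralMass k * r ^ k :=
  (summable_geometric_of_lt_one hr.1 hr.2).of_nonneg_of_le
    (fun k ↦ mul_nonneg (poissonCentralMass_nonneg k) (pow_nonneg hr.1 k))
    fun k ↦ mul_le_of_le_one_left (pow_nonneg hr.1 k) (poissonCentralMass_le_one k)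

theorem poissonCentralMass_isEquivalent :
    poissonCentralMass ~[atTop] fun k : ℕ ↦ (√(2 * k * π))⁻¹ := by
  have h := (IsEquivalent.refl (u := fun k : ℕ ↦ ((k : ℝ) / exp 1) ^ k)).div
    Stirling.factorial_isEquivalent_stirling
  refine h.congr_right (Eventually.of_forall fun k ↦ ?_)
  have hk : ((k : ℝ) / exp 1) ^ k ≠ 0 := by
    rcases eq_or_ne k 0 with rfl | hk
    · simp
    · positivity
  exact div_mul_cancel_right₀ hk _

theorem not_summable_poissonCentralMass : ¬ Summable poissonCentralMass := by
  have hsqrt (k : ℕ) : (√(2 * k * π))⁻¹ = (√(2 * π))⁻¹ * ((k : ℝ) ^ (1 / 2 : ℝ))⁻¹ := by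
    rw [← sqrt_eq_rpow, mul_right_comm, sqrt_mul (by positivity), mul_inv]
  have hconst : (√(2 * π))⁻¹ ≠ 0 := by positivity
  rw [poissonCentralMass_isEquivalent.summable_iff_nat]
  simp only [hsqrt]
  rw [summable_mul_left_iff hconst, summable_nat_rpow_inv]
  norm_num

theorem bijOn_tsum_poissonCentralMass_mul_pow :
    BijOn (fun z : ℝ ↦ ∑' k, poissonCentralMass k * z ^ k) (Ioo 0 1) (Ioi 1) := by
  have hdiv : ¬ Summable fun k ↦ poissonCentralMass k * 1 ^ k := by
    simpa only [one_pow, mul_one] using not_summable_poissonCentralMass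
  simpa only [poissonCentralMass_zero] using bijOn_tsum_mul_pow poissonCentralMass_nonneg one_pos
    (fun _ ↦ summable_poissonCentralMass_mul_pow) hdiv

theorem bijOn_exp_sub_Iio (c : ℝ) : BijOn (fun θ ↦ exp (θ - c)) (Iio c) (Ioo 0 1) := by
  refine ⟨fun θ hθ ↦ ⟨exp_pos _, exp_lt_one_iff.2 (sub_neg.2 hθ)⟩,
    (exp_injective.comp (sub_left_injective (b := c))).injOn, fun z hz ↦ ⟨log z + c, ?_, ?_⟩⟩
  · simpa using log_neg hz.1 hz.2
  · simp only [add_sub_cancel_right, exp_log hz.1]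

theorem bijOn_sub_div_Ioi (b : ℝ) {m : ℝ} (hm : 0 < m) :
    BijOn (fun y ↦ (y - b) / m) (Ioi b) (Ioi 0) := by
  refine ⟨fun y hy ↦ div_pos (sub_pos.2 hy) hm, fun y _ y' _ h ↦ ?_,
    fun w hw ↦ ⟨b + w * m, ?_, ?_⟩⟩
  · exact sub_left_injective ((div_left_inj' hm.ne').1 h)
  · simpa using mul_pos hw hm
  · simp only [add_sub_cancel_left, mul_div_cancel_right₀ w hm.ne']

section Borel

variable {μ θ y : ℝ}

theorem borelPsi_term_eq (hμ : 0 < μ) (n : ℕ) :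
    ((n : ℝ) + 1) * exp (θ * ((n : ℝ) + 1)) * borelWeight μ n =
      poissonCentralMass (n + 1) * exp (θ - (μ - 1 - log μ)) ^ (n + 1) / μ := by
  have hexp : exp (θ - (μ - 1 - log μ)) ^ (n + 1) =
      exp (θ * (n + 1)) * exp (-(n + 1) * μ) * exp 1 ^ (n + 1) * μ ^ (n + 1) := by
    rw [show θ - (μ - 1 - log μ) = θ + -μ + 1 + log μ by ring, exp_add, exp_add, exp_add,
      exp_log hμ, mul_pow, mul_pow, mul_pow, ← exp_nat_mul, ← exp_nat_mul]
    push_cast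
    ring_nf
  rw [borelWeight, poissonCentralMass, hexp, div_pow, mul_pow]
  push_cast
  field_simp
  ring

theorem borelPsi_eq_tsum_poissonCentralMass (hμ : 0 < μ) (hθ : θ < μ - 1 - log μ) :
    borelPsi μ θ =
      (∑' k, poissonCentralMass k * exp (θ - (μ - 1 - log μ)) ^ k - 1) / μ := by
  have hsum := summable_poissonCentralMass_mul_pow <|
    Ioo_subset_Ico_self <| (bijOn_exp_sub_Iio _).mapsTo hθ
  rw [hsum.tsum_eq_zero_add, poissonCentralMass_zero, pow_zero, mul_one, add_sub_cancel_left,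
    ← tsum_div_const]
  exact tsum_congr (borelPsi_term_eq hμ)

theorem bijOn_borelPsi (hμ : 0 < μ) : BijOn (borelPsi μ) (Iio (μ - 1 - log μ)) (Ioi 0) :=
  (((bijOn_sub_div_Ioi 1 hμ).comp bijOn_tsum_poissonCentralMass_mul_pow).comp
    (bijOn_exp_sub_Iio _)).congr fun _ hθ ↦ (borelPsi_eq_tsum_poissonCentralMass hμ hθ).symm

theorem borelPsi_exists_unique_solution_general (hμ : 0 < μ) (hy : 0 < y) :
    ∃! θ : ℝ, θ < μ - 1 - log μ ∧ borelPsi μ θ = y := by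
  obtain ⟨θ, hθ, hθy⟩ := (bijOn_borelPsi hμ).surjOn hy
  exact ⟨θ, ⟨hθ, hθy⟩, fun t ht ↦ (bijOn_borelPsi hμ).injOn ht.1 hθ (ht.2.trans hθy.symm)⟩

end Borel

/-- For `0 < μ < 1`, `ν > 0` and `x > 0`, there is a unique
`θ_x ∈ (-∞, θ₀(μ))`, `θ₀(μ) = μ - 1 - log μ`, with `ψ_μ(θ_x) = x/ν`. -/
theorem borelPsi_exists_unique_solution (μ ν x : ℝ) (hμ0 : 0 < μ) (hμ1 : μ < 1)
    (hν : 0 < ν) (hx : 0 < x) :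
    ∃! θx : ℝ, θx < μ - 1 - Real.log μ ∧ borelPsi μ θx = x / ν :=
  borelPsi_exists_unique_solution_general hμ0 (div_pos hx hν)
end

section
/- Let 0 < μ < 1, θ₀(μ) = μ − 1 − log μ, φ_μ(θ) = Σ_{k=1}^∞ e^{θk}·e^{−kμ}(kμ)^{k−1}/k!, ν > 0, and for x > 0 define Λ*(x) = sup{ θx − ν(φ_μ(θ) − 1) : θ ≤ θ₀(μ) }. Then Λ*(x) tends to ν as x tends to 0 from the right. -/
/-!
When `θ ≤ t` and `x > 0`, the objective `θ x - Λ θ` of the Legendre transform is at most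
`t x - inf Λ`, while a fixed near-minimiser `θ` of `Λ` gives a lower bound tending to `-Λ θ`;
hence the transform tends to `-inf Λ` as `x → 0⁺`. For `Λ = ν (φ_μ - 1)` the infimum is `-ν`,
approached as `θ → -∞` by dominated convergence: the terms of `φ_μ` at `θ₀(μ)` dominate, and
Stirling's lower bound on `k!` makes the `k`-th of them `O(k ^ (-3/2))`.
-/

open Filter Set Topology
open Real (exp log)

theorem tendsto_sSup_image_mul_sub_nhdsGT_zero {S : Set ℝ} {Λ : ℝ → ℝ} {m : ℝ}
    (hS : BddAbove S) (hm : IsGLB (Λ '' S) m) :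
    Tendsto (fun x : ℝ => sSup ((fun θ => θ * x - Λ θ) '' S)) (𝓝[>] 0) (𝓝 (-m)) := by
  obtain ⟨t, ht⟩ := hS
  have hS_nonempty : S.Nonempty := hm.nonempty.of_image
  have le_affine : ∀ x > 0, ∀ y ∈ (fun θ => θ * x - Λ θ) '' S, y ≤ t * x - m := by
    rintro x hx _ ⟨θ, hθ, rfl⟩
    exact sub_le_sub (mul_le_mul_of_nonneg_right (ht hθ) hx.le) (hm.1 (mem_image_of_mem Λ hθ))
  have tendsto_affine (c d : ℝ) : Tendsto (fun x : ℝ => c * x - d) (𝓝[>] 0) (𝓝 (-d)) :=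
    tendsto_nhdsWithin_of_tendsto_nhds <|
      Continuous.tendsto' (by fun_prop) 0 (-d) (by rw [mul_zero, zero_sub])
  refine tendsto_order.2 ⟨fun a ha => ?_, fun b hb => ?_⟩
  · obtain ⟨_, ⟨θ, hθ, rfl⟩, hΛθ⟩ := (isGLB_lt_iff hm).1 (lt_neg.1 ha)
    filter_upwards [(tendsto_affine θ (Λ θ)).eventually_const_lt (lt_neg.1 hΛθ),
      self_mem_nhdsWithin] with x hax hx
    exact hax.trans_le (le_csSup ⟨_, le_affine x hx⟩ (mem_image_of_mem _ hθ))
  · filter_upwards [(tendsto_affine t m).eventually_lt_const hb, self_mem_nhdsWithin] with x hxb hx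
    exact (csSup_le (hS_nonempty.image _) (le_affine x hx)).trans_lt hxb

theorem isGLB_image_Iic_of_tendsto_atBot {α β : Type*} [SemilatticeInf α] [TopologicalSpace β]
    [LinearOrder β] [OrderTopology β] {f : α → β} {m : β} {t : α} (hle : ∀ θ ≤ t, m ≤ f θ)
    (hf : Tendsto f atBot (𝓝 m)) : IsGLB (f '' Iic t) m :=
  have : Nonempty α := ⟨t⟩
  isGLB_of_mem_closure (forall_mem_image.2 hle) <|
    mem_closure_of_tendsto hf ((eventually_le_atBot t).mono fun _ hθ => mem_image_of_mem f hθ)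

theorem tendsto_tsum_exp_mul_atBot {w : ℕ → ℝ} {t : ℝ}
    (hw : Summable fun n : ℕ => exp (t * (n + 1)) * w n) :
    Tendsto (fun θ : ℝ => ∑' n : ℕ, exp (θ * (n + 1)) * w n) atBot (𝓝 0) := by
  have term_tendsto (n : ℕ) : Tendsto (fun θ : ℝ => exp (θ * (n + 1)) * w n) atBot (𝓝 0) := by
    have hexp : Tendsto (fun θ : ℝ => exp (θ * (n + 1))) atBot (𝓝 0) :=
      Real.tendsto_exp_atBot.comp (tendsto_id.atBot_mul_const n.cast_add_one_pos)
    simpa only [zero_mul] using hexp.mul_const (w n)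
  rw [← tsum_zero (α := ℝ) (β := ℕ)]
  refine tendsto_tsum_of_dominated_convergence hw.norm term_tendsto ?_
  filter_upwards [eventually_le_atBot t] with θ hθ n
  rw [norm_mul, norm_mul, Real.norm_of_nonneg (Real.exp_nonneg _),
    Real.norm_of_nonneg (Real.exp_nonneg _)]
  gcongr

theorem div_exp_one_pow_div_factorial_le {k : ℕ} (hk : k ≠ 0) :
    (k / exp 1) ^ k / k.factorial ≤ 1 / √k := by
  have hk_pos : (0 : ℝ) < k := by positivity
  rw [div_le_div_iff₀ (by positivity) (by positivity), one_mul, mul_comm]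
  calc √k * (k / exp 1) ^ k
      ≤ √(2 * Real.pi * k) * (k / exp 1) ^ k := by
        gcongr
        exact le_mul_of_one_le_left hk_pos.le (by linarith [Real.pi_gt_three])
    _ ≤ k.factorial := Stirling.le_factorial_stirling k

theorem borelWeight_nonneg {μ : ℝ} (hμ : 0 ≤ μ) (n : ℕ) : 0 ≤ borelWeight μ n := by
  unfold borelWeight
  positivity

theorem borelPhi_nonneg {μ : ℝ} (hμ : 0 ≤ μ) (θ : ℝ) : 0 ≤ borelPhi μ θ :=
  tsum_nonneg fun n => mul_nonneg (Real.exp_nonneg _) (borelWeight_nonneg hμ n)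

theorem exp_mul_borelWeight_eq {μ : ℝ} (hμ : 0 < μ) (θ : ℝ) (n : ℕ) :
    exp (θ * (n + 1)) * borelWeight μ n =
      μ⁻¹ * exp ((θ - (μ - 1 - log μ)) * (n + 1)) *
        (((n + 1 : ℕ) / exp 1) ^ (n + 1) / (n + 1).factorial / (n + 1 : ℕ)) := by
  have pow_eq_exp : (μ * exp 1) ^ (n + 1) = exp ((log μ + 1) * (n + 1)) := by
    rw [← Real.exp_log hμ, ← Real.exp_add, ← Real.exp_nat_mul, Real.log_exp, mul_comm]
    push_cast
    rfl
  have exp_critical : exp ((θ - (μ - 1 - log μ)) * (n + 1)) =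
      exp (θ * (n + 1)) * exp (-(n + 1) * μ) * (μ * exp 1) ^ (n + 1) := by
    rw [pow_eq_exp, ← Real.exp_add, ← Real.exp_add]
    ring_nf
  rw [exp_critical, borelWeight, mul_pow, div_pow]
  push_cast
  field_simp
  ring

theorem exp_mul_borelWeight_le {μ θ : ℝ} (hμ : 0 < μ) (hθ : θ ≤ μ - 1 - log μ) (n : ℕ) :
    exp (θ * (n + 1)) * borelWeight μ n ≤ μ⁻¹ * (1 / ((n + 1 : ℕ) : ℝ) ^ (3 / 2 : ℝ)) := by
  have exp_le_one : exp ((θ - (μ - 1 - log μ)) * (n + 1)) ≤ 1 :=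
    Real.exp_le_one_iff.2 <|
      mul_nonpos_of_nonpos_of_nonneg (sub_nonpos.2 hθ) n.cast_add_one_pos.le
  have rpow_eq : ((n + 1 : ℕ) : ℝ) ^ (3 / 2 : ℝ) = √(n + 1 : ℕ) * (n + 1 : ℕ) := by
    rw [Real.sqrt_eq_rpow, ← Real.rpow_add_one (by positivity)]
    norm_num
  rw [exp_mul_borelWeight_eq hμ, rpow_eq, ← div_div]
  refine mul_le_mul (mul_le_of_le_one_right (by positivity) exp_le_one) ?_ (by positivity)
    (by positivity)
  exact div_le_div_of_nonneg_right (div_exp_one_pow_div_factorial_le n.succ_ne_zero)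
    (by positivity)

theorem summable_exp_mul_borelWeight {μ θ : ℝ} (hμ : 0 < μ) (hθ : θ ≤ μ - 1 - log μ) :
    Summable fun n : ℕ => exp (θ * (n + 1)) * borelWeight μ n := by
  have summable_bound : Summable fun n : ℕ => μ⁻¹ * (1 / ((n + 1 : ℕ) : ℝ) ^ (3 / 2 : ℝ)) :=
    ((summable_nat_add_iff 1).2 (Real.summable_one_div_nat_rpow.2 (by norm_num))).mul_left _
  exact summable_bound.of_nonneg_of_le
    (fun n => mul_nonneg (Real.exp_nonneg _) (borelWeight_nonneg hμ.le n))
    (exp_mul_borelWeight_le hμ hθ)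

theorem tendsto_borelPhi_atBot {μ : ℝ} (hμ : 0 < μ) : Tendsto (borelPhi μ) atBot (𝓝 0) :=
  tendsto_tsum_exp_mul_atBot (summable_exp_mul_borelWeight hμ le_rfl)

theorem isGLB_image_Iic_mul_borelPhi_sub_one {μ ν : ℝ} (hμ : 0 < μ) (hν : 0 ≤ ν) (t : ℝ) :
    IsGLB ((fun θ => ν * (borelPhi μ θ - 1)) '' Iic t) (-ν) := by
  refine isGLB_image_Iic_of_tendsto_atBot (fun θ _ => ?_) ?_
  · linarith [mul_nonneg hν (borelPhi_nonneg hμ.le θ)]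
  · simpa only [zero_sub, mul_neg_one] using
      ((tendsto_borelPhi_atBot hμ).sub_const 1).const_mul ν

theorem hawkes_rate_function_tendsto_at_zero_general {μ ν : ℝ} (hμ : 0 < μ) (hν : 0 ≤ ν) :
    Tendsto
      (fun x : ℝ => sSup {y : ℝ | ∃ θ ≤ μ - 1 - log μ, y = θ * x - ν * (borelPhi μ θ - 1)})
      (𝓝[>] 0) (𝓝 ν) := by
  simpa only [image, mem_Iic, neg_neg, eq_comm] using
    tendsto_sSup_image_mul_sub_nhdsGT_zero bddAbove_Iic
      (isGLB_image_Iic_mul_borelPhi_sub_one hμ hν (μ - 1 - log μ))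

/-- For `0 < μ < 1`, `ν > 0` and `x > 0`, with
`Λ*(x) = sup{θx - ν(φ_μ(θ) - 1) : θ ≤ θ₀(μ)}`, `θ₀(μ) = μ - 1 - log μ`, we have
`Λ*(x) → ν` as `x → 0⁺`. -/
theorem hawkes_rate_function_tendsto_at_zero (μ ν : ℝ) (hμ0 : 0 < μ) (hμ1 : μ < 1)
    (hν : 0 < ν) :
    Filter.Tendsto
      (fun x : ℝ =>
        sSup {y : ℝ | ∃ θ ≤ μ - 1 - Real.log μ, y = θ * x - ν * (borelPhi μ θ - 1)})
      (nhdsWithin 0 (Set.Ioi 0)) (nhds ν) := by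
  exact hawkes_rate_function_tendsto_at_zero_general hμ0 hν.le
end
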